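/- arXiv:1803.01354 — 3 statements merged into one kernel-verified Lean document; each statement's English description precedes it below -/
import Mathlib

section
/- Let (L, [·,·], α, [p]) be a restricted Hom-Lie superalgebra over F, let H be a Hom-Lie subsuperalgebra of L, and let [p]₁ : H⁰ → H⁰ be a map. Then the following are equivalent: (i) [p]₁ is a p-map on the multiplicative Hom-Lie superalgebra H (with bracket and structure map restricted from L); (ii) there exists a p-semilinear map f : H⁰ → C_L(H) such that x^{[p]₁} = x^{[p]} + f(x) for all x ∈ H⁰. -/
/-!
On `H⁰` the correction term is forced to be `f = pm1 - pm`. The sums `∑ s_i(x, y)` occurring in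
the additivity axiom depend only on the bracket and `α`, so they cancel in the difference of two
`p`-maps; hence `f` is additive and `f (k • x) = k ^ p • f x`. Since both `⁅pm1 x, α y⁆` and
`⁅pm x, α y⁆` equal `(ad_α x)^p y` for `y ∈ H`, the difference `f x` lies in the `α`-centralizer
of `H`. Conversely, adding a `p`-semilinear map with values in the centralizer to `pm` changes
neither the bracket identity nor the two semilinearity axioms.
-/

/-! Basic definitions: Hom-Lie superalgebras, restricted structures, etc. -/

/-- A Hom-Lie superalgebra over a field `F`: a `ℤ/2`-graded vector space with an even
bilinear bracket and an even linear map `α` satisfying super skew-symmetry and the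
Hom-super Jacobi identity. -/
structure HomLieSuper (F : Type*) [Field F] (L : Type*) [AddCommGroup L] [Module F L] where
  grade : ZMod 2 → Submodule F L
  internal : DirectSum.IsInternal grade
  bracket : L →ₗ[F] L →ₗ[F] L
  α : L →ₗ[F] L
  bracket_even : ∀ i j : ZMod 2, ∀ x ∈ grade i, ∀ y ∈ grade j, bracket x y ∈ grade (i + j)
  alpha_even : ∀ i : ZMod 2, ∀ x ∈ grade i, α x ∈ grade i
  skew : ∀ i j : ZMod 2, ∀ x ∈ grade i, ∀ y ∈ grade j,
    bracket x y = (-((-1 : F) ^ (i.val * j.val))) • bracket y x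
  jacobi : ∀ i j k : ZMod 2, ∀ x ∈ grade i, ∀ y ∈ grade j, ∀ z ∈ grade k,
    ((-1 : F) ^ (i.val * k.val)) • bracket (α x) (bracket y z)
      + ((-1 : F) ^ (k.val * j.val)) • bracket (α z) (bracket x y)
      + ((-1 : F) ^ (j.val * i.val)) • bracket (α y) (bracket z x) = 0

/-- Coefficient of `λ^j` in `(ad_α (λ•x + y))^k (x)`, where `(ad_α a)(b) = ⁅a, α b⁆`,
defined by recursion on `k`. -/
def adPolyCoeff {F : Type*} [Field F] {L : Type*} [AddCommGroup L] [Module F L]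
    (b : L →ₗ[F] L →ₗ[F] L) (a : L →ₗ[F] L) (x y : L) : ℕ → ℕ → L
  | 0, 0 => x
  | 0, _ + 1 => 0
  | k + 1, 0 => b y (a (adPolyCoeff b a x y k 0))
  | k + 1, j + 1 => b x (a (adPolyCoeff b a x y k j)) + b y (a (adPolyCoeff b a x y k (j + 1)))

/-- A `p`-semilinear map on a subset `V`: `f (k•x + y) = k^p • f x + f y`. -/
def IsPSemilinearOn (F : Type*) [Field F] {L : Type*} [AddCommGroup L] [Module F L]
    (p : ℕ) (V : Set L) (f : L → L) : Prop :=
  ∀ k : F, ∀ x ∈ V, ∀ y ∈ V, f (k • x + y) = k ^ p • f x + f y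

namespace HomLieSuper

variable {F : Type*} [Field F] {L : Type*} [AddCommGroup L] [Module F L]

/-- Multiplicativity: `α ⁅x, y⁆ = ⁅α x, α y⁆`. -/
def Mult (S : HomLieSuper F L) : Prop :=
  ∀ x y : L, S.α (S.bracket x y) = S.bracket (S.α x) (S.α y)

/-- `L⁰ = {x ∈ L₀ | α x = x}` as a set. -/
def zeroSet (S : HomLieSuper F L) : Set L := {x | x ∈ S.grade 0 ∧ S.α x = x}

/-- `L⁰` as a submodule of `L`. -/
def zeroSub (S : HomLieSuper F L) : Submodule F L where
  carrier := S.zeroSet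
  add_mem' := by
    rintro a b ⟨ha0, ha⟩ ⟨hb0, hb⟩
    exact ⟨(S.grade 0).add_mem ha0 hb0, by simp [map_add, ha, hb]⟩
  zero_mem' := ⟨(S.grade 0).zero_mem, by simp⟩
  smul_mem' := by
    rintro c a ⟨ha0, ha⟩
    exact ⟨(S.grade 0).smul_mem c ha0, by simp [map_smul, ha]⟩

/-- `H⁰ = {x ∈ H ∩ L₀ | α x = x}` for a subspace `H`. -/
def zeroOf (S : HomLieSuper F L) (H : Submodule F L) : Set L :=
  {x | x ∈ H ∧ x ∈ S.grade 0 ∧ S.α x = x}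

/-- `ad_α a : b ↦ ⁅a, α b⁆` as an endomorphism of `L`. -/
def adA (S : HomLieSuper F L) (a : L) : Module.End F L := (S.bracket a) ∘ₗ S.α

/-- The `α`-centralizer `C_L(H) = {x | ⁅x, α y⁆ = 0 ∀ y ∈ H}`. -/
def centralizer (S : HomLieSuper F L) (H : Set L) : Set L :=
  {x | ∀ y ∈ H, S.bracket x (S.α y) = 0}

/-- The `α`-center `C(L)`. -/
def center (S : HomLieSuper F L) : Set L := S.centralizer Set.univ

/-- `s_i(x, y)`: `i • s_i(x,y)` is the coefficient of `λ^(i-1)` in `(ad_α (λx+y))^(p-1) (x)`;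
since `0 < i < p` this determines `s_i` as `(i : F)⁻¹` times that coefficient. -/
def sPoly (S : HomLieSuper F L) (p : ℕ) (x y : L) (i : ℕ) : L :=
  ((i : F)⁻¹) • adPolyCoeff S.bracket S.α x y (p - 1) (i - 1)

/-- `pm` is a `p`-map on the subalgebra `H` (with structure restricted from `L`). -/
def IsPMapOn (S : HomLieSuper F L) (p : ℕ) (H : Submodule F L) (pm : L → L) : Prop :=
  (∀ x ∈ S.zeroOf H, pm x ∈ S.zeroOf H) ∧
  (∀ x ∈ S.zeroOf H, ∀ y ∈ H, ((S.adA x) ^ p) y = S.bracket (pm x) (S.α y)) ∧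
  (∀ k : F, ∀ x ∈ S.zeroOf H, pm (k • x) = k ^ p • pm x) ∧
  (∀ x ∈ S.zeroOf H, ∀ y ∈ S.zeroOf H,
    pm (x + y) = pm x + pm y + ∑ i ∈ Finset.Icc 1 (p - 1), S.sPoly p x y i)

/-- `pm` is a `p`-map on `L` itself. -/
def IsPMap (S : HomLieSuper F L) (p : ℕ) (pm : L → L) : Prop := S.IsPMapOn p ⊤ pm

/-- `H` is a Hom-Lie subsuperalgebra: a graded subspace, `α`-invariant, closed under bracket. -/
def IsSub (S : HomLieSuper F L) (H : Submodule F L) : Prop :=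
  (∀ x ∈ H, ∃ x0 ∈ H ⊓ S.grade 0, ∃ x1 ∈ H ⊓ S.grade 1, x = x0 + x1) ∧
  (∀ x ∈ H, S.α x ∈ H) ∧
  (∀ x ∈ H, ∀ y ∈ H, S.bracket x y ∈ H)

/-- `U` is a Hom-Lie ideal: a graded subspace, `α`-invariant, with `⁅U, L⁆ ⊆ U`. -/
def IsIdeal (S : HomLieSuper F L) (U : Submodule F L) : Prop :=
  (∀ x ∈ U, ∃ x0 ∈ U ⊓ S.grade 0, ∃ x1 ∈ U ⊓ S.grade 1, x = x0 + x1) ∧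
  (∀ x ∈ U, S.α x ∈ U) ∧
  (∀ x ∈ U, ∀ y : L, S.bracket x y ∈ U)

/-- `L` is restrictable: `(ad_α x)^p ∈ ad_α L⁰` for every `x ∈ L⁰`. -/
def Restrictable (S : HomLieSuper F L) (p : ℕ) : Prop :=
  ∀ x ∈ S.zeroSet, ∃ y ∈ S.zeroSet, (S.adA x) ^ p = S.adA y

/-- The subalgebra `H` is restrictable (with structure restricted from `L`). -/
def RestrictableOn (S : HomLieSuper F L) (p : ℕ) (H : Submodule F L) : Prop :=
  ∀ x ∈ S.zeroOf H, ∃ y ∈ S.zeroOf H, ∀ z ∈ H, ((S.adA x) ^ p) z = S.bracket y (S.α z)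

end HomLieSuper

/-- A morphism of Hom-Lie superalgebras: an even linear map compatible with the brackets
and intertwining the structure maps. -/
def IsHomLieSuperMorphism {F : Type*} [Field F] {L : Type*} [AddCommGroup L] [Module F L]
    {G : Type*} [AddCommGroup G] [Module F G]
    (S : HomLieSuper F L) (T : HomLieSuper F G) (φ : L →ₗ[F] G) : Prop :=
  (∀ i : ZMod 2, ∀ x ∈ S.grade i, φ x ∈ T.grade i) ∧
  (∀ u v : L, φ (S.bracket u v) = T.bracket (φ u) (φ v)) ∧
  (∀ x : L, φ (S.α x) = T.α (φ x))

/-- A Lie superalgebra over `F` (bracket even bilinear, super skew-symmetric,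
super Jacobi identity). -/
structure LieSuper (F : Type*) [Field F] (L : Type*) [AddCommGroup L] [Module F L] where
  grade : ZMod 2 → Submodule F L
  internal : DirectSum.IsInternal grade
  bracket : L →ₗ[F] L →ₗ[F] L
  bracket_even : ∀ i j : ZMod 2, ∀ x ∈ grade i, ∀ y ∈ grade j, bracket x y ∈ grade (i + j)
  skew : ∀ i j : ZMod 2, ∀ x ∈ grade i, ∀ y ∈ grade j,
    bracket x y = (-((-1 : F) ^ (i.val * j.val))) • bracket y x
  jacobi : ∀ i j k : ZMod 2, ∀ x ∈ grade i, ∀ y ∈ grade j, ∀ z ∈ grade k,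
    ((-1 : F) ^ (i.val * k.val)) • bracket x (bracket y z)
      + ((-1 : F) ^ (k.val * j.val)) • bracket z (bracket x y)
      + ((-1 : F) ^ (j.val * i.val)) • bracket y (bracket z x) = 0

namespace LieSuper

variable {F : Type*} [Field F] {L : Type*} [AddCommGroup L] [Module F L]

/-- `ad x : b ↦ ⁅x, b⁆`. -/
def ad (S : LieSuper F L) (x : L) : Module.End F L := S.bracket x

/-- `s_i(x, y)` for a Lie superalgebra: `i • s_i(x,y)` is the coefficient of `λ^(i-1)` in
`(ad (λx+y))^(p-1) (x)`. -/
def sPoly (S : LieSuper F L) (p : ℕ) (x y : L) (i : ℕ) : L :=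
  ((i : F)⁻¹) • adPolyCoeff S.bracket LinearMap.id x y (p - 1) (i - 1)

/-- `pm` is a `p`-map making `S` a restricted Lie superalgebra. -/
def IsPMap (S : LieSuper F L) (p : ℕ) (pm : L → L) : Prop :=
  (∀ x ∈ S.grade 0, S.ad x ^ p = S.ad (pm x)) ∧
  (∀ k : F, ∀ x ∈ S.grade 0, pm (k • x) = k ^ p • pm x) ∧
  (∀ x ∈ S.grade 0, ∀ y ∈ S.grade 0,
    pm (x + y) = pm x + pm y + ∑ i ∈ Finset.Icc 1 (p - 1), S.sPoly p x y i)

end LieSuper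

/-- A Hom-associative superalgebra over `F`. -/
structure HomAssocSuper (F : Type*) [Field F] (A : Type*) [AddCommGroup A] [Module F A] where
  grade : ZMod 2 → Submodule F A
  internal : DirectSum.IsInternal grade
  mul : A →ₗ[F] A →ₗ[F] A
  α : A →ₗ[F] A
  mul_even : ∀ i j : ZMod 2, ∀ x ∈ grade i, ∀ y ∈ grade j, mul x y ∈ grade (i + j)
  alpha_even : ∀ i : ZMod 2, ∀ x ∈ grade i, α x ∈ grade i
  assoc : ∀ x y z : A, mul (α x) (mul y z) = mul (mul x y) (α z)
/-- Let `(L, ⁅,⁆, α, [p])` be a restricted Hom-Lie superalgebra, `H` a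
Hom-Lie subsuperalgebra, and `[p]₁ : H⁰ → H⁰` a map. Then `[p]₁` is a `p`-map on `H` iff
there is a `p`-semilinear map `f : H⁰ → C_L(H)` with `x^{[p]₁} = x^{[p]} + f x` on `H⁰`. -/
theorem restricted_sub_pmap_iff {F : Type*} [Field F] {L : Type*} [AddCommGroup L] [Module F L]
    (p : ℕ) [Fact p.Prime] [CharP F p] (hp : 3 < p)
    (S : HomLieSuper F L) (hmult : S.Mult) (pm : L → L) (hpm : S.IsPMap p pm)
    (H : Submodule F L) (hH : S.IsSub H)
    (pm1 : L → L) (hpm1 : ∀ x ∈ S.zeroOf H, pm1 x ∈ S.zeroOf H) :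
    S.IsPMapOn p H pm1 ↔
      ∃ f : L → L, (∀ x ∈ S.zeroOf H, f x ∈ S.centralizer (H : Set L)) ∧
        IsPSemilinearOn F p (S.zeroOf H) f ∧
        ∀ x ∈ S.zeroOf H, pm1 x = pm x + f x := by
  obtain ⟨-, hpm_ad, hpm_smul, hpm_add⟩ := hpm
  have h_top : ∀ x ∈ S.zeroOf H, x ∈ S.zeroOf ⊤ := fun x hx => ⟨trivial, hx.2⟩
  have h_smul : ∀ k : F, ∀ x ∈ S.zeroOf H, k • x ∈ S.zeroOf H := fun k x hx =>
    ⟨H.smul_mem k hx.1, S.zeroSub.smul_mem k hx.2⟩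
  have h_add : ∀ x ∈ S.zeroOf H, ∀ y ∈ S.zeroOf H, x + y ∈ S.zeroOf H := fun x hx y hy =>
    ⟨H.add_mem hx.1 hy.1, S.zeroSub.add_mem hx.2 hy.2⟩
  have h_zero : (0 : L) ∈ S.zeroOf H := ⟨H.zero_mem, S.zeroSub.zero_mem⟩
  constructor
  · rintro ⟨-, h1_ad, h1_smul, h1_add⟩
    refine ⟨fun x => pm1 x - pm x, fun x hx y hy => ?_, fun k x hx y hy => ?_, fun x _ => ?_⟩
    · rw [map_sub, LinearMap.sub_apply, ← h1_ad x hx y hy, ← hpm_ad x (h_top x hx) y trivial,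
        sub_self]
    · have hkx := h_smul k x hx
      simp only [h1_add _ hkx y hy, hpm_add _ (h_top _ hkx) y (h_top y hy), h1_smul k x hx,
        hpm_smul k x (h_top x hx), smul_sub]
      abel
    · exact (add_sub_cancel (pm x) (pm1 x)).symm
  · rintro ⟨f, hf_cent, hf_semi, hf⟩
    -- `k = 1` at `x = y = 0` gives `f 0 = f 0 + f 0`.
    have hf_zero : f 0 = 0 := by
      have h := hf_semi 1 0 h_zero 0 h_zero
      simpa using h
    refine ⟨hpm1, fun x hx y hy => ?_, fun k x hx => ?_, fun x hx y hy => ?_⟩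
    · rw [hf x hx, map_add, LinearMap.add_apply, hf_cent x hx y hy, add_zero]
      exact hpm_ad x (h_top x hx) y trivial
    · have h := hf_semi k x hx 0 h_zero
      rw [add_zero, hf_zero, add_zero] at h
      rw [hf _ (h_smul k x hx), hf x hx, h, hpm_smul k x (h_top x hx), smul_add]
    · have h := hf_semi 1 x hx y hy
      rw [one_smul, one_pow, one_smul] at h
      rw [hf _ (h_add x hx y hy), hf x hx, hf y hy, h, hpm_add x (h_top x hx) y (h_top y hy)]
      abel
end

section
/- Let (L, [·,·]_L, α) and (Γ, [·,·]_Γ, β) be multiplicative Hom-Lie superalgebras over F, let φ : L → Γ be an injective morphism of Hom-Lie superalgebras, let C be a Hom-Lie subsuperalgebra of Γ, and let [p] : C⁰ → C⁰ be a p-map on the multiplicative Hom-Lie superalgebra C. Assume that (φ(x))^{[p]} lies in the image of φ for every x ∈ (φ⁻¹(C))⁰. Then φ⁻¹(C), with bracket and structure map restricted from L and with the map [p]' : (φ⁻¹(C))⁰ → (φ⁻¹(C))⁰ defined by x^{[p]'} = φ⁻¹((φ(x))^{[p]}), is a restricted Hom-Lie superalgebra. -/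
namespace HomLieSuper

variable {F : Type*} [Field F] {L : Type*} [AddCommGroup L] [Module F L]
  {G : Type*} [AddCommGroup G] [Module F G]

lemma isCompl_grade (S : HomLieSuper F L) : IsCompl (S.grade 0) (S.grade 1) :=
  S.internal.isCompl (by decide) (Set.eq_of_subset_of_subset
    (fun i _ => (by decide : ∀ i : ZMod 2, i = 0 ∨ i = 1) i) (Set.subset_univ _))

lemma exists_add_grade (S : HomLieSuper F L) (x : L) :
    ∃ x0 ∈ S.grade 0, ∃ x1 ∈ S.grade 1, x0 + x1 = x :=
  Submodule.mem_sup.1 (S.isCompl_grade.sup_eq_top ▸ Submodule.mem_top)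

lemma add_grade_unique (S : HomLieSuper F L) {a a' b b' : L} (ha : a ∈ S.grade 0)
    (ha' : a' ∈ S.grade 0) (hb : b ∈ S.grade 1) (hb' : b' ∈ S.grade 1)
    (h : a + b = a' + b') : a = a' ∧ b = b' := by
  have hd : a - a' = b' - b := by
    rw [sub_eq_sub_iff_add_eq_add, h, add_comm]
  have h0 : a - a' = 0 := Submodule.disjoint_def.1 S.isCompl_grade.disjoint _
    (Submodule.sub_mem _ ha ha') (hd ▸ Submodule.sub_mem _ hb' hb)
  exact ⟨sub_eq_zero.1 h0, (sub_eq_zero.1 (hd ▸ h0)).symm⟩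

/-- An injective morphism reflects evenness. -/
lemma mem_grade_of_map_mem {S : HomLieSuper F L} {T : HomLieSuper F G} {φ : L →ₗ[F] G}
    (hinj : Function.Injective φ) (hmor : IsHomLieSuperMorphism S T φ) {x : L}
    (hx : φ x ∈ T.grade 0) : x ∈ S.grade 0 := by
  obtain ⟨x0, h0, x1, h1, rfl⟩ := S.exists_add_grade x
  have h := (T.add_grade_unique (hmor.1 0 x0 h0) hx (hmor.1 1 x1 h1) (T.grade 1).zero_mem
    (by rw [map_add, add_zero])).2
  have h1' : x1 = 0 := hinj (by rw [h, map_zero])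
  simpa [h1'] using h0

lemma map_mem_zeroOf {S : HomLieSuper F L} {T : HomLieSuper F G} {φ : L →ₗ[F] G}
    (hmor : IsHomLieSuperMorphism S T φ) {C : Submodule F G} {x : L}
    (hx : x ∈ S.zeroOf (C.comap φ)) : φ x ∈ T.zeroOf C :=
  ⟨hx.1, hmor.1 0 x hx.2.1, by rw [← hmor.2.2, hx.2.2]⟩

lemma mem_zeroOf_of_map_mem {S : HomLieSuper F L} {T : HomLieSuper F G} {φ : L →ₗ[F] G}
    (hinj : Function.Injective φ) (hmor : IsHomLieSuperMorphism S T φ) {C : Submodule F G} {x : L}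
    (hx : φ x ∈ T.zeroOf C) : x ∈ S.zeroOf (C.comap φ) :=
  ⟨hx.1, mem_grade_of_map_mem hinj hmor hx.2.1, hinj (by rw [hmor.2.2, hx.2.2])⟩

lemma smul_mem_zeroOf (S : HomLieSuper F L) {H : Submodule F L} {x : L} (k : F)
    (hx : x ∈ S.zeroOf H) : k • x ∈ S.zeroOf H :=
  ⟨H.smul_mem k hx.1, (S.grade 0).smul_mem k hx.2.1, by rw [map_smul, hx.2.2]⟩

lemma add_mem_zeroOf (S : HomLieSuper F L) {H : Submodule F L} {x y : L}
    (hx : x ∈ S.zeroOf H) (hy : y ∈ S.zeroOf H) : x + y ∈ S.zeroOf H :=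
  ⟨H.add_mem hx.1 hy.1, (S.grade 0).add_mem hx.2.1 hy.2.1, by rw [map_add, hx.2.2, hy.2.2]⟩

lemma map_adA_pow {S : HomLieSuper F L} {T : HomLieSuper F G} {φ : L →ₗ[F] G}
    (hmor : IsHomLieSuperMorphism S T φ) (x y : L) (n : ℕ) :
    φ ((S.adA x ^ n) y) = (T.adA (φ x) ^ n) (φ y) := by
  induction n with
  | zero => simp
  | succ n ih =>
    rw [pow_succ', pow_succ', Module.End.mul_apply, Module.End.mul_apply, ← ih]
    simp only [adA, LinearMap.comp_apply, hmor.2.1, hmor.2.2]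

lemma map_adPolyCoeff {S : HomLieSuper F L} {T : HomLieSuper F G} {φ : L →ₗ[F] G}
    (hmor : IsHomLieSuperMorphism S T φ) (x y : L) (k j : ℕ) :
    φ (adPolyCoeff S.bracket S.α x y k j) = adPolyCoeff T.bracket T.α (φ x) (φ y) k j := by
  induction k generalizing j with
  | zero => cases j <;> simp [adPolyCoeff]
  | succ k ih => cases j <;> simp [adPolyCoeff, hmor.2.1, hmor.2.2, ih]

lemma map_sPoly {S : HomLieSuper F L} {T : HomLieSuper F G} {φ : L →ₗ[F] G}
    (hmor : IsHomLieSuperMorphism S T φ) (p : ℕ) (x y : L) (i : ℕ) :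
    φ (S.sPoly p x y i) = T.sPoly p (φ x) (φ y) i := by
  rw [sPoly, sPoly, map_smul, map_adPolyCoeff hmor]

/-- The grading of `C` passes to `φ⁻¹ C` because the components of `x` map to those of `φ x`. -/
lemma isSub_comap {S : HomLieSuper F L} {T : HomLieSuper F G} {φ : L →ₗ[F] G}
    (hmor : IsHomLieSuperMorphism S T φ) {C : Submodule F G} (hC : T.IsSub C) :
    S.IsSub (C.comap φ) := by
  refine ⟨fun x hx => ?_, fun x hx => ?_, fun x hx y hy => ?_⟩
  · obtain ⟨x0, h0, x1, h1, rfl⟩ := S.exists_add_grade x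
    obtain ⟨c0, hc0, c1, hc1, hc⟩ := hC.1 _ hx
    rw [map_add] at hc
    obtain ⟨e0, e1⟩ := T.add_grade_unique (hmor.1 0 x0 h0) hc0.2 (hmor.1 1 x1 h1) hc1.2 hc
    exact ⟨x0, ⟨by simpa [e0] using hc0.1, h0⟩, x1, ⟨by simpa [e1] using hc1.1, h1⟩, rfl⟩
  · rw [Submodule.mem_comap, hmor.2.2]
    exact hC.2.1 _ hx
  · rw [Submodule.mem_comap, hmor.2.1]
    exact hC.2.2 _ hx _ hy

end HomLieSuper

/-- Preimage of a restricted subalgebra under an injective morphism: if `C`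
is a Hom-Lie subsuperalgebra of `Γ` carrying a `p`-map `[p]`, and `(φ x)^{[p]}` is in the image
of `φ` for all `x ∈ (φ⁻¹ C)⁰`, then `φ⁻¹ C` with `x^{[p]'} = φ⁻¹ ((φ x)^{[p]})` is a
restricted Hom-Lie superalgebra. -/
theorem preimage_restricted {F : Type*} [Field F] {L : Type*} [AddCommGroup L] [Module F L]
    {G : Type*} [AddCommGroup G] [Module F G]
    (p : ℕ) [Fact p.Prime] [CharP F p] (hp : 3 < p)
    (S : HomLieSuper F L) (hmS : S.Mult) (T : HomLieSuper F G) (hmT : T.Mult)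
    (φ : L →ₗ[F] G) (hinj : Function.Injective φ) (hmor : IsHomLieSuperMorphism S T φ)
    (C : Submodule F G) (hC : T.IsSub C)
    (pmC : G → G) (hpmC : T.IsPMapOn p C pmC)
    (hrange : ∀ x ∈ S.zeroOf (C.comap φ), pmC (φ x) ∈ Set.range φ) :
    S.IsSub (C.comap φ) ∧
      ∃ pm' : L → L, (∀ x ∈ S.zeroOf (C.comap φ), φ (pm' x) = pmC (φ x)) ∧
        S.IsPMapOn p (C.comap φ) pm' := by
  refine ⟨HomLieSuper.isSub_comap hmor hC, ?_⟩
  choose! pm' hpm' using hrange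
  obtain ⟨hmem, had, hsmul, hadd⟩ := hpmC
  have hφ := fun x (hx : x ∈ S.zeroOf (C.comap φ)) => HomLieSuper.map_mem_zeroOf hmor hx
  refine ⟨pm', hpm', fun x hx => ?_, fun x hx y hy => hinj ?_, fun k x hx => hinj ?_,
    fun x hx y hy => hinj ?_⟩
  · apply HomLieSuper.mem_zeroOf_of_map_mem hinj hmor
    rw [hpm' x hx]
    exact hmem _ (hφ x hx)
  · rw [HomLieSuper.map_adA_pow hmor, had _ (hφ x hx) _ hy, hmor.2.1, hmor.2.2, hpm' x hx]
  · rw [hpm' _ (S.smul_mem_zeroOf k hx), map_smul, map_smul, hsmul k _ (hφ x hx), hpm' x hx]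
  · simp only [hpm' _ (S.add_mem_zeroOf hx hy), map_add, map_sum, hpm' x hx, hpm' y hy,
      HomLieSuper.map_sPoly hmor, hadd _ (hφ x hx) _ (hφ y hy)]
end

section
/- Let (L, [·,·], α) be a multiplicative Hom-Lie superalgebra over F and let U and W be Hom-Lie ideals of L such that L = U ⊕ W as an internal direct sum of graded subspaces. Then L is restrictable if and only if both U and W (each a multiplicative Hom-Lie superalgebra with bracket and structure map restricted from L) are restrictable. -/
namespace HomLieSuper

variable {F : Type*} [Field F] {L : Type*} [AddCommGroup L] [Module F L]

/-- The ideal `W` absorbs brackets from the other side too. `IsIdeal` only provides `⁅W, L⁆ ⊆ W`,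
and skew-symmetry is available for homogeneous elements, so both factors are split into their
even and odd parts. -/
lemma bracket_mem_right {S : HomLieSuper F L} {U W : Submodule F L}
    (hU : S.IsIdeal U) (hW : S.IsIdeal W) {u w : L} (hu : u ∈ U) (hw : w ∈ W) :
    S.bracket u w ∈ W := by
  have key : ∀ i j : ZMod 2, ∀ a ∈ S.grade i, ∀ b ∈ S.grade j, b ∈ W → S.bracket a b ∈ W := by
    intro i j a ha b hb hbW
    rw [S.skew i j a ha b hb]
    exact W.smul_mem _ (hW.2.2 b hbW a)
  obtain ⟨u0, hu0, u1, hu1, rfl⟩ := hU.1 u hu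
  obtain ⟨w0, hw0, w1, hw1, rfl⟩ := hW.1 w hw
  simp only [map_add, LinearMap.add_apply]
  exact W.add_mem
    (W.add_mem (key 0 0 _ hu0.2 _ hw0.2 hw0.1) (key 1 0 _ hu1.2 _ hw0.2 hw0.1))
    (W.add_mem (key 0 1 _ hu0.2 _ hw1.2 hw1.1) (key 1 1 _ hu1.2 _ hw1.2 hw1.1))

lemma bracket_eq_zero {S : HomLieSuper F L} {U W : Submodule F L}
    (hU : S.IsIdeal U) (hW : S.IsIdeal W) (hdisj : U ⊓ W = ⊥) {u w : L}
    (hu : u ∈ U) (hw : w ∈ W) : S.bracket u w = 0 := by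
  have h : S.bracket u w ∈ U ⊓ W := ⟨hU.2.2 u hu w, bracket_mem_right hU hW hu hw⟩
  rwa [hdisj, Submodule.mem_bot] at h

lemma exists_zeroOf_decomp {S : HomLieSuper F L} {U W : Submodule F L}
    (hU : S.IsIdeal U) (hW : S.IsIdeal W) (hdisj : U ⊓ W = ⊥) (hsum : U ⊔ W = ⊤)
    {x : L} (hx : x ∈ S.zeroSet) : ∃ u ∈ S.zeroOf U, ∃ w ∈ S.zeroOf W, x = u + w := by
  obtain ⟨hx0, hxα⟩ := hx
  obtain ⟨u, hu, w, hw, rfl⟩ := Submodule.mem_sup.1 (hsum ▸ Submodule.mem_top : x ∈ U ⊔ W)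
  obtain ⟨u0, hu0, u1, hu1, rfl⟩ := hU.1 u hu
  obtain ⟨w0, hw0, w1, hw1, rfl⟩ := hW.1 w hw
  have hgr : Disjoint (S.grade 0) (S.grade 1) :=
    S.internal.submodule_iSupIndep.pairwiseDisjoint (by decide : (0 : ZMod 2) ≠ 1)
  -- The odd part `u1 + w1` is also even, being the difference of `x` and `u0 + w0`.
  have hodd : u1 + w1 = 0 := by
    refine Submodule.disjoint_def.1 hgr _ ?_ ((S.grade 1).add_mem hu1.2 hw1.2)
    have h := (S.grade 0).sub_mem hx0 ((S.grade 0).add_mem hu0.2 hw0.2)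
    convert h using 1
    abel
  have hx' : u0 + u1 + (w0 + w1) = u0 + w0 := by
    rw [add_add_add_comm, hodd, add_zero]
  rw [hx', map_add] at hxα
  have heq : S.α u0 - u0 = w0 - S.α w0 := by
    rw [sub_eq_sub_iff_add_eq_add, hxα, add_comm]
  have hz : S.α u0 - u0 = 0 := by
    have h : S.α u0 - u0 ∈ U ⊓ W :=
      ⟨U.sub_mem (hU.2.1 _ hu0.1) hu0.1, heq ▸ W.sub_mem hw0.1 (hW.2.1 _ hw0.1)⟩
    rwa [hdisj, Submodule.mem_bot] at h
  exact ⟨u0, ⟨hu0.1, hu0.2, sub_eq_zero.1 hz⟩,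
    w0, ⟨hw0.1, hw0.2, (sub_eq_zero.1 (heq ▸ hz)).symm⟩, hx'⟩

/-- On `U`, powers of `ad_α (u + w)` agree with those of `ad_α u`. Membership in `U` is carried
along because the induction needs the iterates to stay in `U`. -/
lemma adA_pow_add {S : HomLieSuper F L} {U W : Submodule F L}
    (hU : S.IsIdeal U) (hW : S.IsIdeal W) (hdisj : U ⊓ W = ⊥) {u w : L}
    (hu : u ∈ U) (hw : w ∈ W) (n : ℕ) {a : L} (ha : a ∈ U) :
    (S.adA (u + w) ^ n) a = (S.adA u ^ n) a ∧ (S.adA u ^ n) a ∈ U := by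
  induction n with
  | zero => simpa using ha
  | succ n ih =>
    obtain ⟨h1, h2⟩ := ih
    have h3 : S.bracket w (S.α ((S.adA u ^ n) a)) = 0 :=
      bracket_eq_zero hW hU (inf_comm U W ▸ hdisj) hw (hU.2.1 _ h2)
    rw [pow_succ', pow_succ', Module.End.mul_apply, Module.End.mul_apply, h1]
    refine ⟨?_, hU.2.2 u hu _⟩
    generalize (S.adA u ^ n) a = b at h3 ⊢
    simp [adA, h3]

lemma Restrictable.restrictableOn {S : HomLieSuper F L} {U W : Submodule F L} {p : ℕ}
    (h : S.Restrictable p) (hU : S.IsIdeal U) (hW : S.IsIdeal W) (hdisj : U ⊓ W = ⊥)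
    (hsum : U ⊔ W = ⊤) : S.RestrictableOn p U := by
  intro x hx
  obtain ⟨y, hy, hxy⟩ := h x hx.2
  obtain ⟨u, hu, w, hw, rfl⟩ := exists_zeroOf_decomp hU hW hdisj hsum hy
  refine ⟨u, hu, fun z hz => ?_⟩
  have h0 : S.bracket w (S.α z) = 0 :=
    bracket_eq_zero hW hU (inf_comm U W ▸ hdisj) hw.1 (hU.2.1 _ hz)
  rw [hxy]
  simp [adA, h0]

end HomLieSuper

/-- If `L = U ⊕ W` is a direct sum of Hom-Lie ideals, then `L` is
restrictable iff both `U` and `W` are restrictable. -/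
theorem restrictable_directSum_ideals {F : Type*} [Field F] {L : Type*} [AddCommGroup L]
    [Module F L] (p : ℕ) [Fact p.Prime] [CharP F p] (hp : 3 < p)
    (S : HomLieSuper F L) (hmult : S.Mult)
    (U W : Submodule F L) (hU : S.IsIdeal U) (hW : S.IsIdeal W)
    (hdisj : U ⊓ W = ⊥) (hsum : U ⊔ W = ⊤) :
    S.Restrictable p ↔ (S.RestrictableOn p U ∧ S.RestrictableOn p W) := by
  have hdisj' : W ⊓ U = ⊥ := inf_comm U W ▸ hdisj
  have hsum' : W ⊔ U = ⊤ := sup_comm U W ▸ hsum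
  constructor
  · intro h
    exact ⟨h.restrictableOn hU hW hdisj hsum, h.restrictableOn hW hU hdisj' hsum'⟩
  · rintro ⟨hRU, hRW⟩ x hx
    obtain ⟨u, hu, w, hw, rfl⟩ := HomLieSuper.exists_zeroOf_decomp hU hW hdisj hsum hx
    obtain ⟨u', hu', hEu⟩ := hRU u hu
    obtain ⟨w', hw', hEw⟩ := hRW w hw
    refine ⟨u' + w', S.zeroSub.add_mem hu'.2 hw'.2, LinearMap.ext fun z => ?_⟩
    obtain ⟨a, ha, b, hb, rfl⟩ := Submodule.mem_sup.1 (hsum ▸ Submodule.mem_top : z ∈ U ⊔ W)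
    have e1 := (HomLieSuper.adA_pow_add hU hW hdisj hu.1 hw.1 p ha).1
    have e2 := (HomLieSuper.adA_pow_add hW hU hdisj' hw.1 hu.1 p hb).1
    rw [add_comm w u] at e2
    have z1 : S.bracket w' (S.α a) = 0 :=
      HomLieSuper.bracket_eq_zero hW hU hdisj' hw'.1 (hU.2.1 _ ha)
    have z2 : S.bracket u' (S.α b) = 0 :=
      HomLieSuper.bracket_eq_zero hU hW hdisj hu'.1 (hW.2.1 _ hb)
    rw [map_add, e1, e2, hEu a ha, hEw b hb]
    simp [HomLieSuper.adA, z1, z2]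
end
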